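/- Let Ω ⊂ [0,∞)² be a strongly convex moment domain. Then 𝔩₁(Ω) = 𝔲₁(Ω) = min(a(Ω), b(Ω)). -/

import Mathlib

/-!
Reflecting in the coordinate axes and averaging shows that `Ω` contains, with each point `u`, the
axis points `(u₁, 0)` and `(0, u₂)`, and the origin (`single_mem`, `zero_mem_domain`). Hence
`‖e₁‖* = a(Ω)`, `‖e₂‖* = b(Ω)` (`widthA_eq`, `widthB_eq`), every `Ω`-norm is nonnegative, and
`‖-e_j‖* = 0` because `Ω` lies in the nonnegative quadrant. Therefore the sequence `(e_j, -e_j)`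
has total norm `‖e_j‖*`.

Conversely, nonzero integer vectors with zero sum include one with a coordinate `v_j ≥ 1`. Testing
this vector against the axis points of `Ω` gives `‖v‖* ≥ ‖e_j‖*`
(`omegaNorm_single_le`), so no sequence has total norm below the minimum of the widths.
-/

open scoped BigOperators

/-- The `Ω`-norm `‖v‖*_Ω = sup_{u ∈ Ω} ⟨u, v⟩`. -/
noncomputable def omegaNorm {n : ℕ} (Ω : Set (Fin n → ℝ)) (v : Fin n → ℝ) : ℝ :=
  sSup ((fun u => ∑ i, u i * v i) '' Ω)

/-- Coercion of an integer vector to a real vector. -/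
def toR {n : ℕ} (v : Fin n → ℤ) : Fin n → ℝ := fun i => (v i : ℝ)

/-- The set of values `∑ ‖v_i‖*_Ω` over sequences `v_1, …, v_m ∈ ℤⁿ \ 0`
with `m ≥ k+1` and `∑ v_i = 0`. -/
def lSet {n : ℕ} (Ω : Set (Fin n → ℝ)) (k : ℕ) : Set ℝ :=
  {x | ∃ (m : ℕ) (v : Fin m → Fin n → ℤ),
    k + 1 ≤ m ∧ (∀ i, v i ≠ 0) ∧ (∑ i, v i) = 0 ∧
    x = ∑ i, omegaNorm Ω (toR (v i))}

/-- The lower bound quantity `𝔩_k(Ω)`. -/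
noncomputable def lk {n : ℕ} (Ω : Set (Fin n → ℝ)) (k : ℕ) : ℝ := sInf (lSet Ω k)

/-- The standard basis vector `e_j` of `ℤ²`. -/
def eInt (j : Fin 2) : Fin 2 → ℤ := Pi.single j 1

/-- The admissibility condition on sequences for `𝔲_k`: either `m = 2` and the
sequence is `e_j, -e_j` for some `j`, or for each `j` some `v_i` is not in the
`ℝ`-span of `e_j`. -/
def uAdmissible (m : ℕ) (v : Fin m → Fin 2 → ℤ) : Prop :=
  (m = 2 ∧ ∃ j : Fin 2, ∃ i₁ i₂ : Fin m, i₁ ≠ i₂ ∧ v i₁ = eInt j ∧ v i₂ = -eInt j) ∨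
  (∀ j : Fin 2, ∃ i : Fin m, ∃ j' : Fin 2, j' ≠ j ∧ v i j' ≠ 0)

/-- The set of values `∑ ‖v_i‖*_Ω` over admissible sequences for `𝔲_k`. -/
def uSet (Ω : Set (Fin 2 → ℝ)) (k : ℕ) : Set ℝ :=
  {x | ∃ (m : ℕ) (v : Fin m → Fin 2 → ℤ),
    k + 1 ≤ m ∧ (∀ i, v i ≠ 0) ∧ (∑ i, v i) = 0 ∧ uAdmissible m v ∧
    x = ∑ i, omegaNorm Ω (toR (v i))}

/-- The upper bound quantity `𝔲_k(Ω)`. -/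
noncomputable def uk (Ω : Set (Fin 2 → ℝ)) (k : ℕ) : ℝ := sInf (uSet Ω k)

/-- The symmetrization `Ω̂ = {x : (|x₁|, |x₂|) ∈ Ω}`. -/
def hatSet (Ω : Set (Fin 2 → ℝ)) : Set (Fin 2 → ℝ) := {x | (fun i => |x i|) ∈ Ω}

/-- A strongly convex moment domain: `Ω ⊂ [0,∞)²` with `Ω̂` convex and compact
with nonempty interior. -/
def IsStronglyConvexDomain (Ω : Set (Fin 2 → ℝ)) : Prop :=
  (∀ u ∈ Ω, ∀ i, 0 ≤ u i) ∧ Convex ℝ (hatSet Ω) ∧ IsCompact (hatSet Ω) ∧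
    (interior (hatSet Ω)).Nonempty

/-- The width `a(Ω) = max {a : (a,0) ∈ Ω}`. -/
noncomputable def widthA (Ω : Set (Fin 2 → ℝ)) : ℝ := sSup {a : ℝ | ![a, 0] ∈ Ω}

/-- The width `b(Ω) = max {b : (0,b) ∈ Ω}`. -/
noncomputable def widthB (Ω : Set (Fin 2 → ℝ)) : ℝ := sSup {b : ℝ | ![0, b] ∈ Ω}

section MomentDomain

variable {Ω : Set (Fin 2 → ℝ)}

lemma mem_hatSet_of_mem (h : IsStronglyConvexDomain Ω) {u : Fin 2 → ℝ} (hu : u ∈ Ω) :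
    u ∈ hatSet Ω := by
  have : (fun i => |u i|) = u := funext fun i => abs_of_nonneg (h.1 u hu i)
  change (fun i => |u i|) ∈ Ω
  rwa [this]

/-- `Ω` is closed under projection to the axes, by averaging a point of the symmetrization with
its mirror image. -/
lemma single_mem (h : IsStronglyConvexDomain Ω) {u : Fin 2 → ℝ} (hu : u ∈ Ω) (j : Fin 2) :
    Pi.single j (u j) ∈ Ω := by
  have hrefl : (fun i => if i = j then u i else -u i) ∈ hatSet Ω := by
    have : (fun i => |if i = j then u i else -u i|) = u := by
      funext i
      have := h.1 u hu i
      split_ifs <;> simp [abs_of_nonneg this]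
    change (fun i => |if i = j then u i else -u i|) ∈ Ω
    rwa [this]
  have hconv : Convex ℝ (hatSet Ω) := h.2.1
  have hmid := hconv (mem_hatSet_of_mem h hu) hrefl (show (0 : ℝ) ≤ 1 / 2 by norm_num)
    (show (0 : ℝ) ≤ 1 / 2 by norm_num) (by norm_num)
  have heq : (fun i => |((1 / 2 : ℝ) • u + (1 / 2 : ℝ) •
      (fun i => if i = j then u i else -u i : Fin 2 → ℝ)) i|) = Pi.single j (u j) := by
    funext i
    by_cases hij : i = j
    · subst hij
      simpa [← two_mul] using h.1 u hu i
    · simp [hij]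
  change (fun i => |((1 / 2 : ℝ) • u + (1 / 2 : ℝ) •
      (fun i => if i = j then u i else -u i : Fin 2 → ℝ)) i|) ∈ Ω at hmid
  rwa [heq] at hmid

lemma zero_mem_domain (h : IsStronglyConvexDomain Ω) : (0 : Fin 2 → ℝ) ∈ Ω := by
  obtain ⟨x, hx⟩ := h.2.2.2
  have hx' : x ∈ hatSet Ω := interior_subset hx
  have h1 : (fun i => |x i|) ∈ Ω := hx'
  have h2 := single_mem h (single_mem h h1 0) 1
  simpa using h2

/-- The supremum defining the `Ω`-norm is that of a bounded set. -/
lemma bddAbove_pairing (h : IsStronglyConvexDomain Ω) (v : Fin 2 → ℝ) :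
    BddAbove ((fun u => ∑ i, u i * v i) '' Ω) := by
  have hc : IsCompact ((fun u : Fin 2 → ℝ => ∑ i, u i * v i) '' hatSet Ω) :=
    h.2.2.1.image (by fun_prop)
  exact hc.bddAbove.mono (Set.image_mono fun u hu => mem_hatSet_of_mem h hu)

lemma pairing_le (h : IsStronglyConvexDomain Ω) (v : Fin 2 → ℝ) {u : Fin 2 → ℝ} (hu : u ∈ Ω) :
    ∑ i, u i * v i ≤ omegaNorm Ω v :=
  le_csSup (bddAbove_pairing h v) ⟨u, hu, rfl⟩

lemma omegaNorm_nonneg (h : IsStronglyConvexDomain Ω) (v : Fin 2 → ℝ) : 0 ≤ omegaNorm Ω v := by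
  simpa using pairing_le h v (zero_mem_domain h)

lemma omegaNorm_le (h : IsStronglyConvexDomain Ω) {v : Fin 2 → ℝ} {c : ℝ}
    (hc : ∀ u ∈ Ω, ∑ i, u i * v i ≤ c) : omegaNorm Ω v ≤ c := by
  refine csSup_le ⟨_, ⟨0, zero_mem_domain h, rfl⟩⟩ ?_
  rintro _ ⟨u, hu, rfl⟩
  exact hc u hu

lemma pairing_eInt (u : Fin 2 → ℝ) (j : Fin 2) : ∑ i, u i * toR (eInt j) i = u j := by
  fin_cases j <;> simp [toR, eInt, Fin.sum_univ_two]

lemma omegaNorm_neg_eInt (h : IsStronglyConvexDomain Ω) (j : Fin 2) :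
    omegaNorm Ω (toR (-eInt j)) = 0 := by
  refine le_antisymm (omegaNorm_le h fun u hu => ?_) (omegaNorm_nonneg h _)
  have hneg : ∑ i, u i * toR (-eInt j) i = -(∑ i, u i * toR (eInt j) i) := by
    simp [toR]
  rw [hneg, pairing_eInt]
  linarith [h.1 u hu j]

/-- Only the axis points of `Ω` are needed here, so the other coordinate of `v` may have any
sign. -/
lemma omegaNorm_single_le (h : IsStronglyConvexDomain Ω) (v : Fin 2 → ℤ) (j : Fin 2)
    (hv : 1 ≤ v j) : omegaNorm Ω (toR (eInt j)) ≤ omegaNorm Ω (toR v) := by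
  refine omegaNorm_le h fun u hu => ?_
  rw [pairing_eInt]
  have h1 := pairing_le h (toR v) (single_mem h hu j)
  have h2 : ∑ i, (Pi.single j (u j) : Fin 2 → ℝ) i * toR v i = u j * (v j : ℝ) := by
    fin_cases j <;> simp [toR, Fin.sum_univ_two]
  rw [h2] at h1
  have h3 : (1 : ℝ) ≤ (v j : ℝ) := by exact_mod_cast hv
  nlinarith [h.1 u hu j]

/-- The `j`-th width, as a supremum over axis points, equals `‖e_j‖*`. -/
lemma sSup_single_eq (h : IsStronglyConvexDomain Ω) (j : Fin 2) :
    sSup {a : ℝ | (Pi.single j a : Fin 2 → ℝ) ∈ Ω} = omegaNorm Ω (toR (eInt j)) := by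
  have hset : {a : ℝ | (Pi.single j a : Fin 2 → ℝ) ∈ Ω} =
      (fun u => ∑ i, u i * toR (eInt j) i) '' Ω := by
    ext a
    simp only [pairing_eInt]
    constructor
    · intro ha
      exact ⟨_, ha, by simp⟩
    · rintro ⟨u, hu, rfl⟩
      exact single_mem h hu j
  rw [hset, omegaNorm]

lemma widthA_eq (h : IsStronglyConvexDomain Ω) : widthA Ω = omegaNorm Ω (toR (eInt 0)) := by
  rw [← sSup_single_eq h, widthA]
  have (a : ℝ) : ![a, 0] = Pi.single (0 : Fin 2) a := by ext i; fin_cases i <;> simp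
  simp only [this]

lemma widthB_eq (h : IsStronglyConvexDomain Ω) : widthB Ω = omegaNorm Ω (toR (eInt 1)) := by
  rw [← sSup_single_eq h, widthB]
  have (a : ℝ) : ![0, a] = Pi.single (1 : Fin 2) a := by ext i; fin_cases i <;> simp
  simp only [this]

lemma uSet_subset_lSet (k : ℕ) : uSet Ω k ⊆ lSet Ω k := by
  rintro x ⟨m, v, hm, hv, hs, -, hx⟩
  exact ⟨m, v, hm, hv, hs, hx⟩

/-- The value of the two-term sequence `e_j, -e_j`. -/
lemma omegaNorm_eInt_mem_uSet (h : IsStronglyConvexDomain Ω) (j : Fin 2) :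
    omegaNorm Ω (toR (eInt j)) ∈ uSet Ω 1 := by
  have hne : eInt j ≠ 0 := by simp [eInt]
  refine ⟨2, ![eInt j, -eInt j], le_rfl, ?_, by simp, Or.inl ⟨rfl, j, 0, 1, by simp, rfl, rfl⟩, ?_⟩
  · intro i
    fin_cases i <;> simpa using hne
  · simp [Fin.sum_univ_two, omegaNorm_neg_eInt h]

lemma exists_one_le_coord {m : ℕ} (v : Fin m → Fin 2 → ℤ) (hm : 2 ≤ m) (hv : ∀ i, v i ≠ 0)
    (hs : ∑ i, v i = 0) : ∃ i j, 1 ≤ v i j := by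
  by_contra! hcon
  -- If no coordinate is positive, zero sum forces every coordinate to vanish.
  refine hv ⟨0, by omega⟩ (funext fun j => ?_)
  have hsj : ∑ i, v i j = 0 := by simpa using congrFun hs j
  exact (Finset.sum_eq_zero_iff_of_nonpos fun i _ => by have := hcon i j; omega).1 hsj _
    (Finset.mem_univ _)

lemma min_width_le (h : IsStronglyConvexDomain Ω) {x : ℝ} (hx : x ∈ lSet Ω 1) :
    min (widthA Ω) (widthB Ω) ≤ x := by
  obtain ⟨m, v, hm, hv, hs, rfl⟩ := hx
  obtain ⟨i, j, hij⟩ := exists_one_le_coord v hm hv hs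
  have hmin : min (widthA Ω) (widthB Ω) ≤ omegaNorm Ω (toR (eInt j)) := by
    rw [widthA_eq h, widthB_eq h]
    fin_cases j
    · exact min_le_left _ _
    · exact min_le_right _ _
  exact hmin.trans <| (omegaNorm_single_le h (v i) j hij).trans <|
    Finset.single_le_sum (f := fun i => omegaNorm Ω (toR (v i)))
      (fun i _ => omegaNorm_nonneg h _) (Finset.mem_univ i)

lemma min_width_mem_uSet (h : IsStronglyConvexDomain Ω) :
    min (widthA Ω) (widthB Ω) ∈ uSet Ω 1 := by
  rw [widthA_eq h, widthB_eq h]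
  rcases min_choice (omegaNorm Ω (toR (eInt 0))) (omegaNorm Ω (toR (eInt 1))) with hc | hc <;>
    rw [hc] <;> exact omegaNorm_eInt_mem_uSet h _

end MomentDomain

/-- For a strongly convex moment domain `Ω ⊂ [0,∞)²`,
`𝔩₁(Ω) = 𝔲₁(Ω) = min(a(Ω), b(Ω))`. -/
theorem lk_uk_first (Ω : Set (Fin 2 → ℝ)) (h : IsStronglyConvexDomain Ω) :
    lk Ω 1 = min (widthA Ω) (widthB Ω) ∧ uk Ω 1 = min (widthA Ω) (widthB Ω) := by
  have hmem := min_width_mem_uSet h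
  have hl : IsLeast (lSet Ω 1) (min (widthA Ω) (widthB Ω)) :=
    ⟨uSet_subset_lSet 1 hmem, fun _ hx => min_width_le h hx⟩
  have hu : IsLeast (uSet Ω 1) (min (widthA Ω) (widthB Ω)) :=
    ⟨hmem, fun _ hx => min_width_le h (uSet_subset_lSet 1 hx)⟩
  exact ⟨hl.csInf_eq, hu.csInf_eq⟩
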